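/- Let Ω be a finite nonempty type of interpretations, let ≼ be a total preorder on Ω, and let K = min(Ω, ≼) be the set of ≼-minimal elements of Ω. Define the revision operator ∘ by K∘A = min(A, ≼) for every A ⊆ Ω. Then ≼ is faithful to K, and ∘ satisfies the KM postulates with respect to K: (KM1) K∘A ⊆ A; (KM2) if K ∩ A is nonempty then K∘A = K ∩ A; (KM3) if A is nonempty then K∘A is nonempty; (KM5) (K∘A) ∩ B ⊆ K∘(A ∩ B); (KM6) if (K∘A) ∩ B is nonempty then K∘(A ∩ B) ⊆ (K∘A) ∩ B. -/

import Mathlib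

/-!
Everything except KM3 follows from transitivity alone: an element lying below some minimal
element of `A` lies below all of `A`. Applied to `A = Ω` this gives strictness in the
faithfulness condition and KM2; applied to a minimal element of `A` lying in `B` it gives KM6.
KM3 is the existence of least elements in nonempty finite sets, `exists_least_of_total`.
-/

/-- A nonempty finite set has a least element for any total preorder: when a point `a` is
added to a set with least element `m`, the smaller of `a` and `m` is least. -/
theorem exists_least_of_total {Ω : Type*} [Finite Ω] (pre : Ω → Ω → Prop)
    (hrefl : ∀ a, pre a a) (htrans : ∀ a b c, pre a b → pre b c → pre a c)
    (htotal : ∀ a b : Ω, pre a b ∨ pre b a) (A : Set Ω) (hA : A.Nonempty) :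
    ∃ m ∈ A, ∀ x ∈ A, pre m x := by
  induction A, A.toFinite using Set.Finite.induction_on with
  | empty => exact absurd hA Set.not_nonempty_empty
  | @insert a s _ _ ih =>
    rcases s.eq_empty_or_nonempty with rfl | hs
    · exact ⟨a, by simp, by simpa using hrefl a⟩
    · obtain ⟨m, hm, hle⟩ := ih hs
      rcases htotal a m with h | h
      · refine ⟨a, Set.mem_insert _ _, ?_⟩
        rintro x (rfl | hx)
        · exact hrefl x
        · exact htrans _ _ _ h (hle x hx)
      · refine ⟨m, Set.mem_insert_of_mem _ hm, ?_⟩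
        rintro x (rfl | hx)
        · exact h
        · exact hle x hx

/-- Given a total preorder `≼` on a finite nonempty `Ω`, with
`K = min(Ω, ≼)` and `K ∘ A = min(A, ≼)`, the preorder is faithful to `K`
and the operator satisfies the KM postulates (KM1, KM2, KM3, KM5, KM6). -/
theorem min_revision_faithful_and_KM {Ω : Type*} [Fintype Ω] [Nonempty Ω]
    (pre : Ω → Ω → Prop) (hrefl : Reflexive pre) (htrans : Transitive pre)
    (htotal : ∀ a b : Ω, pre a b ∨ pre b a)
    (K : Set Ω) (hK : K = {ω : Ω | ∀ ω' : Ω, pre ω ω'})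
    (rev : Set Ω → Set Ω)
    (hrev : ∀ A : Set Ω, rev A = {ω ∈ A | ∀ ω' ∈ A, pre ω ω'}) :
    -- faithfulness of `pre` to `K`
    (∀ ω ω' : Ω, ω ∈ K → ω' ∈ K → pre ω ω' ∧ pre ω' ω) ∧
    (∀ ω ω' : Ω, ω ∈ K → ω' ∉ K → pre ω ω' ∧ ¬ pre ω' ω) ∧
    -- KM postulates
    (∀ A : Set Ω, rev A ⊆ A) ∧                                       -- KM1
    (∀ A : Set Ω, (K ∩ A).Nonempty → rev A = K ∩ A) ∧                -- KM2
    (∀ A : Set Ω, A.Nonempty → (rev A).Nonempty) ∧                   -- KM3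
    (∀ A B : Set Ω, rev A ∩ B ⊆ rev (A ∩ B)) ∧                       -- KM5
    (∀ A B : Set Ω, (rev A ∩ B).Nonempty → rev (A ∩ B) ⊆ rev A ∩ B) := by
  subst hK
  have tr : ∀ a b c, pre a b → pre b c → pre a c := fun _ _ _ h h' => htrans h h'
  simp only [hrev]
  refine ⟨fun ω ω' h h' => ⟨h ω', h' ω⟩,
    fun ω ω' h h' => ⟨h ω', fun hle => h' fun x => tr _ _ _ hle (h x)⟩,
    fun A ω h => h.1, ?_, fun A hA => ?_, ?_, ?_⟩
  · rintro A ⟨k, hk, hkA⟩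
    ext ω
    exact ⟨fun h => ⟨fun x => tr _ _ _ (h.2 k hkA) (hk x), h.1⟩,
      fun h => ⟨h.2, fun x _ => h.1 x⟩⟩
  · exact exists_least_of_total pre (fun a => hrefl a) tr htotal A hA
  · rintro A B ω ⟨⟨hA, hmin⟩, hB⟩
    exact ⟨⟨hA, hB⟩, fun x hx => hmin x hx.1⟩
  · rintro A B ⟨m, ⟨hmA, hmin⟩, hmB⟩ ω ⟨⟨hA, hB⟩, hω⟩
    exact ⟨⟨hA, fun x hx => tr _ _ _ (hω m ⟨hmA, hmB⟩) (hmin x hx)⟩, hB⟩
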